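/- Dissipativity estimate for the operator J (the inequality established in the proof of Lemma 1). Let S* = (X*,Λ*,Z*) be an equilibrium point. Then for every triple S = (X,Λ,Z) with x_i ∈ Ω_i for all i, ⟨S - S*, J(S)⟩ ≤ -∑_{i=1}^n ⟨x_i - x*_i, ∇f_i(x_i) - ∇f_i(x*_i)⟩ - ∑_{i=1}^n ∑_{j=1}^n L̄_{ij} ⟨λ_i - λ*_i, λ_j - λ*_j⟩. -/

import Mathlib

open scoped BigOperators RealInnerProductSpace

/-- The bilinear form `(u, v) ↦ ∑ᵢ ⟪uᵢ, ∑ⱼ Aᵢⱼ vⱼ⟫` of a symmetric matrix is symmetric. -/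
theorem Matrix.IsSymm.sum_inner_sum_smul_comm {ι E : Type*} [Fintype ι]
    [NormedAddCommGroup E] [InnerProductSpace ℝ E] {A : Matrix ι ι ℝ} (hA : A.IsSymm)
    (u v : ι → E) :
    ∑ i, ⟪u i, ∑ j, A i j • v j⟫ = ∑ i, ⟪v i, ∑ j, A i j • u j⟫ := by
  simp only [inner_sum, real_inner_smul_right]
  rw [Finset.sum_comm]
  refine Finset.sum_congr rfl fun i _ => Finset.sum_congr rfl fun j _ => ?_
  rw [hA.apply, real_inner_comm]

/-- **Dissipativity estimate for the operator `J`** (proof of Lemma 1).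
If `S* = (X*,Λ*,Z*)` is an equilibrium point, then for every triple `S = (X,Λ,Z)` with
`xᵢ ∈ Ωᵢ`,
`⟨S - S*, J(S)⟩ ≤ -∑ᵢ ⟨xᵢ - x*ᵢ, ∇fᵢ(xᵢ) - ∇fᵢ(x*ᵢ)⟩ - ∑ᵢ∑ⱼ L̄ᵢⱼ ⟨λᵢ - λ*ᵢ, λⱼ - λ*ⱼ⟩`,
where `⟨S - S*, J(S)⟩` is written out blockwise. -/
theorem dissipativity_estimate_J
    (n m : ℕ) (hn : 0 < n)
    (f : Fin n → EuclideanSpace ℝ (Fin m) → ℝ)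
    (hdiff : ∀ i, Differentiable ℝ (f i))
    (Ω : Fin n → Set (EuclideanSpace ℝ (Fin m)))
    (hΩne : ∀ i, (Ω i).Nonempty) (hΩcl : ∀ i, IsClosed (Ω i))
    (hΩconv : ∀ i, Convex ℝ (Ω i))
    (d : Fin n → EuclideanSpace ℝ (Fin m))
    (Lbar : Matrix (Fin n) (Fin n) ℝ) (hsym : Lbar.IsSymm)
    -- the equilibrium point S* = (X*, Λ*, Z*)
    (xs lams zs : Fin n → EuclideanSpace ℝ (Fin m))
    (heq_mem : ∀ i, xs i ∈ Ω i)
    (heq_nc : ∀ i, ∀ y ∈ Ω i, ⟪lams i - gradient (f i) (xs i), y - xs i⟫ ≤ 0)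
    (heq_lam : ∀ i, ∑ j, Lbar i j • (lams j + zs j) = d i - xs i)
    (heq_z : ∀ i, ∑ j, Lbar i j • lams j = 0)
    -- an arbitrary triple S = (X, Λ, Z) with xᵢ ∈ Ωᵢ
    (x lam z : Fin n → EuclideanSpace ℝ (Fin m))
    (hx_mem : ∀ i, x i ∈ Ω i) :
    ∑ i, (⟪x i - xs i, -gradient (f i) (x i) + lam i⟫
        + ⟪lam i - lams i, d i - x i - ∑ j, Lbar i j • (lam j + z j)⟫
        + ⟪z i - zs i, ∑ j, Lbar i j • lam j⟫)
      ≤ -∑ i, ⟪x i - xs i, gradient (f i) (x i) - gradient (f i) (xs i)⟫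
        - ∑ i, ∑ j, Lbar i j * ⟪lam i - lams i, lam j - lams j⟫ := by
  have hcross := hsym.sum_inner_sum_smul_comm (fun i => lam i - lams i) (fun i => z i - zs i)
  have hLam : ∀ i, d i - x i - ∑ j, Lbar i j • (lam j + z j)
      = -(x i - xs i) - ∑ j, Lbar i j • (lam j - lams j) - ∑ j, Lbar i j • (z j - zs j) := by
    intro i
    have h := heq_lam i
    simp only [smul_add, smul_sub, Finset.sum_add_distrib, Finset.sum_sub_distrib] at h ⊢
    rw [eq_add_of_sub_eq h.symm]
    abel
  have hZ : ∀ i, ∑ j, Lbar i j • lam j = ∑ j, Lbar i j • (lam j - lams j) := by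
    intro i
    simp only [smul_sub, Finset.sum_sub_distrib, heq_z i, sub_zero]
  have hterm : ∀ i, ⟪x i - xs i, -gradient (f i) (x i) + lam i⟫
        + ⟪lam i - lams i, d i - x i - ∑ j, Lbar i j • (lam j + z j)⟫
        + ⟪z i - zs i, ∑ j, Lbar i j • lam j⟫
      ≤ -⟪x i - xs i, gradient (f i) (x i) - gradient (f i) (xs i)⟫
        - ∑ j, Lbar i j * ⟪lam i - lams i, lam j - lams j⟫
        - ⟪lam i - lams i, ∑ j, Lbar i j • (z j - zs j)⟫
        + ⟪z i - zs i, ∑ j, Lbar i j • (lam j - lams j)⟫ := by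
    intro i
    have hquad : ⟪lam i - lams i, ∑ j, Lbar i j • (lam j - lams j)⟫
        = ∑ j, Lbar i j * ⟪lam i - lams i, lam j - lams j⟫ := by
      simp only [inner_sum, real_inner_smul_right]
    have hnc := heq_nc i (x i) (hx_mem i)
    have hgrad : -gradient (f i) (x i) + lam i
        = -(gradient (f i) (x i) - gradient (f i) (xs i)) + (lam i - lams i)
          + (lams i - gradient (f i) (xs i)) := by abel
    rw [hLam, hZ, hgrad, inner_add_right, inner_add_right, inner_neg_right,
      inner_sub_right (lam i - lams i), inner_sub_right (lam i - lams i),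
      inner_neg_right, hquad, real_inner_comm (x i - xs i) (lam i - lams i)]
    rw [real_inner_comm] at hnc
    linarith
  refine (Finset.sum_le_sum fun i _ => hterm i).trans ?_
  rw [Finset.sum_add_distrib, Finset.sum_sub_distrib, Finset.sum_sub_distrib,
    Finset.sum_neg_distrib]
  linarith
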